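/- arXiv:2602.15029 — 8 statements merged into one kernel-verified Lean document; each statement's English description precedes it below -/
import Mathlib

section
/- Let σ > 0 and let L be a positive integer, and set q = exp(−2/(σL)). Define the periodized exponential kernel C(δ) = ∑_{m ∈ ℤ} exp(−|δ + 2m|/σ). Then for every integer n: ∑_{j=0}^{L−1} C(2j/L) · exp(−2πi n j / L) = (1 − q²) / (1 − 2q·cos(2πn/L) + q²). -/
open Finset Real Complex

/-!
Since `2j/L + 2m = (2/L)(mL + j)`, the `m`-th term of `C(2j/L)` is `q ^ |mL + j|`. As `(j, m)` runs
over `{0, …, L - 1} × ℤ` the integer `k = mL + j` runs once over `ℤ`, and an `L`-th root of unity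
satisfies `ζ ^ k = ζ ^ j`. The finite Fourier transform of the periodization is therefore the
bilateral series `∑ q ^ |k| ζ ^ k`, whose value is the Poisson kernel of the unit disc.
-/

theorem sum_range_tsum_mul_add {α : Type*} [AddCommGroup α] [UniformSpace α] [IsUniformAddGroup α]
    [CompleteSpace α] [T0Space α] {f : ℤ → α} (hf : Summable f) (L : ℕ) [NeZero L] :
    ∑ j ∈ Finset.range L, ∑' m : ℤ, f (m * L + j) = ∑' k : ℤ, f k := by
  let e : Fin L × ℤ ≃ ℤ := (Equiv.prodComm _ _).trans (Int.divModEquiv L).symm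
  calc ∑ j ∈ Finset.range L, ∑' m : ℤ, f (m * L + j)
      = ∑ j : Fin L, ∑' m : ℤ, f (e (j, m)) := Finset.sum_range _
    _ = ∑' p : Fin L × ℤ, f (e p) := by
      simpa only [tsum_fintype, Function.comp_apply] using (e.summable_iff.mpr hf).tsum_prod.symm
    _ = ∑' k : ℤ, f k := e.tsum_eq f

theorem sum_range_tsum_mul_pow_of_pow_eq_one {𝕜 : Type*} [NormedField 𝕜] [CompleteSpace 𝕜]
    {L : ℕ} [NeZero L] {f : ℤ → 𝕜} {ζ : 𝕜} (hζ : ζ ^ L = 1)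
    (hf : Summable fun k : ℤ => f k * ζ ^ k) :
    ∑ j ∈ Finset.range L, (∑' m : ℤ, f (m * L + j)) * ζ ^ j = ∑' k : ℤ, f k * ζ ^ k := by
  have hζ_zpow (m : ℤ) (j : ℕ) : ζ ^ (m * L + j) = ζ ^ j := by
    have hζ₀ : ζ ≠ 0 := by
      rintro rfl
      exact zero_ne_one ((zero_pow (NeZero.ne L)).symm.trans hζ)
    rw [zpow_add₀ hζ₀, mul_comm m, zpow_mul, zpow_natCast, hζ, one_zpow, one_mul, zpow_natCast]
  simp only [← sum_range_tsum_mul_add hf L, hζ_zpow, tsum_mul_right]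

theorem hasSum_pow_natAbs_mul_zpow {𝕜 : Type*} [NormedField 𝕜] {r u : 𝕜} (hu : u ≠ 0)
    (h : ‖r * u‖ < 1) (h' : ‖r * u⁻¹‖ < 1) :
    HasSum (fun k : ℤ => r ^ k.natAbs * u ^ k) ((1 - r ^ 2) / ((1 - r * u) * (1 - r * u⁻¹))) := by
  have h_ne {v : 𝕜} (hv : ‖v‖ < 1) : 1 - v ≠ 0 :=
    sub_ne_zero.mpr fun hv' => by simp [← hv'] at hv
  have h_value : (1 - r ^ 2) / ((1 - r * u) * (1 - r * u⁻¹)) =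
      (1 - r * u)⁻¹ + r * u⁻¹ * (1 - r * u⁻¹)⁻¹ := by
    rw [div_eq_iff (mul_ne_zero (h_ne h) (h_ne h'))]
    linear_combination r ^ 2 * mul_inv_cancel₀ hu - (1 - r * u⁻¹) * inv_mul_cancel₀ (h_ne h) -
      (r * u⁻¹) * (1 - r * u) * inv_mul_cancel₀ (h_ne h')
  have h_neg_term (k : ℕ) : r ^ (-(k + 1 : ℤ)).natAbs * u ^ (-(k + 1 : ℤ)) =
      r * u⁻¹ * (r * u⁻¹) ^ k := by
    rw [Int.natAbs_neg, zpow_neg, ← inv_zpow, ← pow_succ', mul_pow]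
    norm_cast
  rw [h_value]
  apply HasSum.of_nat_of_neg_add_one
  · simpa only [Int.natAbs_natCast, zpow_natCast, mul_pow] using
      hasSum_geometric_of_norm_lt_one h
  · simpa only [h_neg_term] using (hasSum_geometric_of_norm_lt_one h').mul_left (r * u⁻¹)

theorem hasSum_pow_natAbs_mul_exp_zpow {q : ℝ} (hq : |q| < 1) (θ : ℝ) :
    HasSum (fun k : ℤ => (q : ℂ) ^ k.natAbs * Complex.exp (θ * Complex.I) ^ k)
      (((1 - q ^ 2) / (1 - 2 * q * Real.cos θ + q ^ 2) : ℝ) : ℂ) := by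
  have h_norm (t : ℝ) : ‖(q : ℂ) * Complex.exp (t * Complex.I)‖ < 1 := by
    rwa [norm_mul, Complex.norm_exp_ofReal_mul_I, mul_one, Complex.norm_real]
  have h_inv : (Complex.exp (θ * Complex.I))⁻¹ = Complex.exp ((-θ : ℝ) * Complex.I) := by
    rw [← Complex.exp_neg, Complex.ofReal_neg, neg_mul]
  have h_two_cos : Complex.exp (θ * Complex.I) + (Complex.exp (θ * Complex.I))⁻¹ =
      2 * Complex.cos θ := by
    rw [Complex.two_cos, neg_mul, Complex.exp_neg]
  have h_denom : 1 - 2 * q * Complex.cos θ + q ^ 2 =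
      (1 - q * Complex.exp (θ * Complex.I)) * (1 - q * (Complex.exp (θ * Complex.I))⁻¹) := by
    linear_combination q * h_two_cos -
      (q : ℂ) ^ 2 * mul_inv_cancel₀ (Complex.exp_ne_zero (θ * Complex.I))
  push_cast
  rw [h_denom]
  exact hasSum_pow_natAbs_mul_zpow (Complex.exp_ne_zero _) (h_norm θ) (h_inv ▸ h_norm (-θ))

theorem exp_neg_abs_two_mul_div_add_eq_pow {L : ℕ} [NeZero L] (σ : ℝ) (j : ℕ) (m : ℤ) :
    Real.exp (-|2 * (j : ℝ) / L + 2 * m| / σ) =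
      Real.exp (-2 / (σ * L)) ^ (m * L + j).natAbs := by
  have h_abs : |2 * (j : ℝ) / L + 2 * m| = 2 / L * ((m * L + j).natAbs : ℝ) := by
    have h_factor : 2 * (j : ℝ) / L + 2 * m = 2 / L * ((m * L + j : ℤ) : ℝ) := by
      push_cast
      field_simp [NeZero.ne (L : ℝ)]
      ring
    rw [h_factor, abs_mul, abs_of_nonneg (by positivity), Nat.cast_natAbs, Int.cast_abs]
  rw [h_abs, ← Real.exp_nat_mul]
  congr 1
  ring

/-- Discrete Fourier transform of the periodized exponential kernel
`C(δ) = ∑_{m∈ℤ} exp(−|δ+2m|/σ)` on the lattice `{2j/L}`: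
`∑_{j=0}^{L−1} C(2j/L) e^{−2πi n j/L} = (1−q²)/(1−2q cos(2πn/L)+q²)` with
`q = exp(−2/(σL))`. -/
theorem periodized_exponential_kernel_dft (σ : ℝ) (hσ : 0 < σ) (L : ℕ) (hL : 0 < L)
    (n : ℤ) :
    let q : ℝ := Real.exp (-2 / (σ * L))
    let C : ℝ → ℝ := fun δ => ∑' m : ℤ, Real.exp (-|δ + 2 * m| / σ)
    ∑ j ∈ Finset.range L,
        (C (2 * j / L) : ℂ) * Complex.exp (-(2 * Real.pi * Complex.I * n * j / L)) =
      (((1 - q ^ 2) / (1 - 2 * q * Real.cos (2 * Real.pi * n / L) + q ^ 2) : ℝ) : ℂ) := by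
  intro q C
  have : NeZero L := ⟨hL.ne'⟩
  have hq : |q| < 1 := by
    rw [Real.abs_exp, Real.exp_lt_one_iff]
    exact div_neg_of_neg_of_pos (by norm_num) (by positivity)
  have hC (j : ℕ) : (C (2 * j / L) : ℂ) = ∑' m : ℤ, (q : ℂ) ^ (m * L + j).natAbs := by
    simp only [C, q, exp_neg_abs_two_mul_div_add_eq_pow, Complex.ofReal_tsum, Complex.ofReal_pow]
  let θ : ℝ := -(2 * Real.pi * n / L)
  let ζ : ℂ := Complex.exp (θ * Complex.I)
  have hζ_pow (j : ℕ) : ζ ^ j = Complex.exp (-(2 * Real.pi * Complex.I * n * j / L)) := by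
    rw [← Complex.exp_nat_mul]
    congr 1
    push_cast [θ]
    ring
  have hζ : ζ ^ L = 1 := by
    rw [← Complex.exp_nat_mul, Complex.exp_eq_one_iff]
    refine ⟨-n, ?_⟩
    push_cast [θ]
    field_simp [NeZero.ne (L : ℂ)]
  have h_series : HasSum _ _ := hasSum_pow_natAbs_mul_exp_zpow hq θ
  simp only [hC, ← hζ_pow]
  rw [sum_range_tsum_mul_pow_of_pow_eq_one hζ h_series.summable, h_series.tsum_eq, Real.cos_neg]
end

section
/- Let σ > 0 and let k > 0 satisfy tan k = −σk (equivalently, sin k + σk·cos k = 0). Then for every x ∈ [−1, 1]: ∫_{−1}^{1} exp(−|x−y|/σ) · sin(k y) dy = (2σ / (1 + σ²k²)) · sin(k x). -/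
open Real intervalIntegral

/-!
For `κ ≠ 0`, `y ↦ exp (-κ |x - y|) / (2 κ)` is the Green's function of `κ² - d²/dy²` on `[a, b]` for
the Robin conditions `f' a = κ f a`, `f' b = -κ f b`. Hence every solution of `f'' = μ f` satisfying
them is an eigenfunction of the kernel `exp (-κ |x - y|)`, with eigenvalue `2 κ / (κ² - μ)`. For
`f y = sin (k y)` on `[-L, L]` and `κ = σ⁻¹`, oddness makes the two Robin conditions equivalent, and
both say `sin (k L) + σ k cos (k L) = 0`.
-/

section RobinGreen

open MeasureTheory Set

variable {E : Type*} [NormedAddCommGroup E] [NormedSpace ℝ E] {f f' f'' : ℝ → E} {a b x : ℝ}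

lemma hasDerivAt_exp_smul_smul_sub_deriv (c x : ℝ) {y : ℝ} (hf : HasDerivAt f (f' y) y)
    (hf' : HasDerivAt f' (f'' y) y) :
    HasDerivAt (fun t ↦ exp (c * (t - x)) • (c • f t - f' t))
      (exp (c * (y - x)) • (c ^ 2 • f y - f'' y)) y := by
  have hexp : HasDerivAt (fun t ↦ exp (c * (t - x))) (exp (c * (y - x)) * c) y := by
    simpa using (((hasDerivAt_id y).sub_const x).const_mul c).exp
  refine (hexp.fun_smul ((hf.const_smul c).sub hf')).congr_deriv ?_
  simp only [Pi.sub_apply, Pi.smul_apply]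
  module

lemma integral_exp_neg_mul_abs_smul_eq_add {g : ℝ → E} (κ : ℝ) (hx : x ∈ Icc a b)
    (hg : IntervalIntegrable g volume a b) :
    ∫ y in a..b, exp (-κ * |x - y|) • g y =
      (∫ y in a..x, exp (κ * (y - x)) • g y) + ∫ y in x..b, exp (-κ * (y - x)) • g y := by
  have hint : IntervalIntegrable (fun y ↦ exp (-κ * |x - y|) • g y) volume a b :=
    hg.continuousOn_smul (by fun_prop)
  have hx' : x ∈ uIcc a b := Icc_subset_uIcc hx
  rw [← integral_add_adjacent_intervals (hint.mono_set (uIcc_subset_uIcc_left hx'))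
    (hint.mono_set (uIcc_subset_uIcc_right hx'))]
  congr 1 <;> refine integral_congr fun y hy ↦ ?_
  · rw [uIcc_of_le hx.1] at hy
    simp only [abs_of_nonneg (sub_nonneg.2 hy.2), neg_mul, ← mul_neg, neg_sub]
  · rw [uIcc_of_le hx.2] at hy
    simp only [abs_of_nonpos (sub_nonpos.2 hy.1), neg_sub]

variable [CompleteSpace E]

lemma integral_exp_smul_sq_smul_sub_deriv2 (c x : ℝ)
    (hf : ∀ y ∈ uIcc a b, HasDerivAt f (f' y) y) (hf' : ∀ y ∈ uIcc a b, HasDerivAt f' (f'' y) y)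
    (hg : IntervalIntegrable (fun y ↦ c ^ 2 • f y - f'' y) volume a b) :
    ∫ y in a..b, exp (c * (y - x)) • (c ^ 2 • f y - f'' y) =
      exp (c * (b - x)) • (c • f b - f' b) - exp (c * (a - x)) • (c • f a - f' a) :=
  integral_eq_sub_of_hasDerivAt
    (fun y hy ↦ hasDerivAt_exp_smul_smul_sub_deriv c x (hf y hy) (hf' y hy))
    (hg.continuousOn_smul (by fun_prop))

lemma integral_exp_neg_mul_abs_smul_sq_smul_sub_deriv2 (κ : ℝ) (hx : x ∈ Icc a b)
    (hf : ∀ y ∈ Icc a b, HasDerivAt f (f' y) y) (hf' : ∀ y ∈ Icc a b, HasDerivAt f' (f'' y) y)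
    (hg : IntervalIntegrable (fun y ↦ κ ^ 2 • f y - f'' y) volume a b) :
    ∫ y in a..b, exp (-κ * |x - y|) • (κ ^ 2 • f y - f'' y) =
      (2 * κ) • f x - exp (-κ * (x - a)) • (κ • f a - f' a)
        - exp (-κ * (b - x)) • (κ • f b + f' b) := by
  have hx' : x ∈ uIcc a b := Icc_subset_uIcc hx
  have hleft : uIcc a x ⊆ Icc a b := uIcc_of_le hx.1 ▸ Icc_subset_Icc_right hx.2
  have hright : uIcc x b ⊆ Icc a b := uIcc_of_le hx.2 ▸ Icc_subset_Icc_left hx.1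
  have integral_left := integral_exp_smul_sq_smul_sub_deriv2 κ x
    (fun y hy ↦ hf y (hleft hy)) (fun y hy ↦ hf' y (hleft hy))
    (hg.mono_set (uIcc_subset_uIcc_left hx'))
  have integral_right := integral_exp_smul_sq_smul_sub_deriv2 (-κ) x
    (fun y hy ↦ hf y (hright hy)) (fun y hy ↦ hf' y (hright hy))
    (by simpa only [neg_sq] using hg.mono_set (uIcc_subset_uIcc_right hx'))
  rw [neg_sq] at integral_right
  rw [integral_exp_neg_mul_abs_smul_eq_add κ hx hg, integral_left, integral_right,
    sub_self, mul_zero, mul_zero, exp_zero, show κ * (a - x) = -κ * (x - a) by ring]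
  module

lemma integral_exp_neg_mul_abs_smul_of_robin {κ μ : ℝ} (hμ : κ ^ 2 ≠ μ)
    (hf : ∀ y ∈ Icc a b, HasDerivAt f (f' y) y) (hf' : ∀ y ∈ Icc a b, HasDerivAt f' (μ • f y) y)
    (ha : f' a = κ • f a) (hb : f' b = -κ • f b) (hx : x ∈ Icc a b) :
    ∫ y in a..b, exp (-κ * |x - y|) • f y = (2 * κ / (κ ^ 2 - μ)) • f x := by
  have hfc : IntervalIntegrable f volume a b :=
    (HasDerivAt.continuousOn hf).intervalIntegrable_of_Icc (hx.1.trans hx.2)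
  have hgreen : (κ ^ 2 - μ) • ∫ y in a..b, exp (-κ * |x - y|) • f y = (2 * κ) • f x :=
    calc (κ ^ 2 - μ) • ∫ y in a..b, exp (-κ * |x - y|) • f y
        = ∫ y in a..b, exp (-κ * |x - y|) • (κ ^ 2 • f y - μ • f y) := by
          simp only [← intervalIntegral.integral_smul, ← sub_smul, smul_comm (κ ^ 2 - μ)]
      _ = (2 * κ) • f x := by
          rw [integral_exp_neg_mul_abs_smul_sq_smul_sub_deriv2 κ hx hf hf'
            ((hfc.smul _).sub (hfc.smul _)), ha, hb]
          module
  rw [div_eq_inv_mul, mul_smul, ← hgreen, inv_smul_smul₀ (sub_ne_zero.2 hμ)]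

end RobinGreen

lemma hasDerivAt_sin_const_mul (k y : ℝ) :
    HasDerivAt (fun t ↦ sin (k * t)) (k * cos (k * y)) y := by
  simpa [mul_comm] using ((hasDerivAt_id y).const_mul k).sin

lemma hasDerivAt_const_mul_cos_const_mul (k y : ℝ) :
    HasDerivAt (fun t ↦ k * cos (k * t)) (-k ^ 2 * sin (k * y)) y := by
  refine (((hasDerivAt_id y).const_mul k).cos.const_mul k).congr_deriv ?_
  simp only [id_eq]
  ring

lemma sin_add_mul_mul_cos_eq_zero_of_tan_eq {σ k : ℝ} (hσ : σ ≠ 0) (h : tan k = -(σ * k)) :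
    sin k + σ * k * cos k = 0 := by
  have hcos : cos k ≠ 0 := by
    intro hzero
    -- Where `cos` vanishes, `tan` takes the junk value `0`, and `h` forces `k = 0`.
    have hk : k = 0 := by simpa [tan_eq_sin_div_cos, hzero, hσ] using h
    simp [hk] at hzero
  rw [← tan_mul_cos hcos, h]
  ring

theorem exponential_kernel_odd_eigenfunction_general {σ k L x : ℝ} (hσ : σ ≠ 0)
    (hquant : sin (k * L) + σ * k * cos (k * L) = 0) (hx : x ∈ Set.Icc (-L) L) :
    ∫ y in -L..L, exp (-|x - y| / σ) * sin (k * y) =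
      2 * σ / (1 + σ ^ 2 * k ^ 2) * sin (k * x) := by
  have hμ : σ⁻¹ ^ 2 ≠ -k ^ 2 :=
    ((neg_nonpos.2 (sq_nonneg k)).trans_lt (by positivity)).ne'
  have hrobin : k * cos (k * L) = -σ⁻¹ * sin (k * L) := by
    field_simp
    linarith
  have heigen := integral_exp_neg_mul_abs_smul_of_robin hμ
    (fun y _ ↦ hasDerivAt_sin_const_mul k y) (fun y _ ↦ hasDerivAt_const_mul_cos_const_mul k y)
    (by simpa using hrobin) hrobin hx
  have heigenvalue : 2 * σ⁻¹ / (σ⁻¹ ^ 2 - -k ^ 2) = 2 * σ / (1 + σ ^ 2 * k ^ 2) := by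
    rw [sub_neg_eq_add]
    field_simp
  simpa only [heigenvalue, smul_eq_mul, neg_mul, mul_neg, div_eq_inv_mul] using heigen

/-- Odd-sector eigenfunction identity for the exponential kernel operator on `[−1,1]`:
if `tan k = −σk` with `k > 0`, then `sin(kx)` is an eigenfunction of
`f ↦ ∫_{−1}^1 exp(−|x−y|/σ) f(y) dy` with eigenvalue `2σ/(1+σ²k²)`. -/
theorem exponential_kernel_odd_eigenfunction (σ : ℝ) (hσ : 0 < σ) (k : ℝ) (hk : 0 < k)
    (hquant : Real.tan k = -(σ * k)) :
    ∀ x ∈ Set.Icc (-1 : ℝ) 1,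
      ∫ y in (-1 : ℝ)..1, Real.exp (-|x - y| / σ) * Real.sin (k * y) =
        (2 * σ / (1 + σ ^ 2 * k ^ 2)) * Real.sin (k * x) := by
  have hquant' := sin_add_mul_mul_cos_eq_zero_of_tan_eq hσ.ne' hquant
  exact fun x hx ↦ exponential_kernel_odd_eigenfunction_general hσ.ne' (by rwa [mul_one]) hx
end

section
/- Let σ > 0 and let k > 0 satisfy tan k = k / (1 + σ(1+σ)k²). Define φ(y) = cos(k y) − sin(k)/k for y ∈ [−1, 1]. Then for every x ∈ [−1, 1]: ∫_{−1}^{1} exp(−|x−y|/σ) φ(y) dy − (1/2) ∫_{−1}^{1} ∫_{−1}^{1} exp(−|z−y|/σ) φ(y) dy dz = (2σ / (1 + σ²k²)) · φ(x). Moreover ∫_{−1}^{1} φ(y) dy = 0. -/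
open Real intervalIntegral

/-!
The kernel `exp (-|x - y| / σ)` is `2σ` times a Green's function of `1 - σ² d²/dx²`: integrating it
against `f - σ² f''` gives `2σ f` plus boundary terms, which vanish under the Robin conditions
`f = σ f'` at the left endpoint and `f = -σ f'` at the right one.  Every function
`φ y = cos (k y) - c` has the form `f - σ² f''` with `f y = cos (k y) / (1 + σ² k²) - c`, and for
`c = sin k / k` the quantization condition says exactly that `f` satisfies the Robin conditions
at `±1`.  Hence `H φ = 2σ f` is an affine function of `φ`, and centering removes the constant.
-/

section GreenFunction

variable {σ a b : ℝ} {f f' f'' : ℝ → ℝ}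

theorem integral_exp_mul_sub_sq_mul_deriv2 (hσ : σ ≠ 0) (x : ℝ)
    (hf : ∀ y ∈ Set.uIcc a b, HasDerivAt f (f' y) y)
    (hf' : ∀ y ∈ Set.uIcc a b, HasDerivAt f' (f'' y) y)
    (hf'' : IntervalIntegrable f'' MeasureTheory.volume a b) :
    ∫ y in a..b, exp ((y - x) / σ) * (f y - σ ^ 2 * f'' y) =
      σ * exp ((b - x) / σ) * (f b - σ * f' b) - σ * exp ((a - x) / σ) * (f a - σ * f' a) := by
  have hderiv : ∀ y ∈ Set.uIcc a b,
      HasDerivAt (fun y ↦ σ * exp ((y - x) / σ) * (f y - σ * f' y))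
        (exp ((y - x) / σ) * (f y - σ ^ 2 * f'' y)) y := by
    intro y hy
    have hexp : HasDerivAt (fun y ↦ σ * exp ((y - x) / σ)) (exp ((y - x) / σ)) y := by
      refine ((((hasDerivAt_id y).sub_const x).div_const σ).exp.const_mul σ).congr_deriv ?_
      simp only [id]
      field_simp
    refine (hexp.mul ((hf y hy).sub ((hf' y hy).const_mul σ))).congr_deriv ?_
    simp only [Pi.sub_apply]
    ring
  have hf_int : IntervalIntegrable f MeasureTheory.volume a b :=
    (HasDerivAt.continuousOn hf).intervalIntegrable
  exact integral_eq_sub_of_hasDerivAt hderiv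
    ((hf_int.sub (hf''.const_mul _)).continuousOn_mul (by fun_prop))

theorem integral_exp_neg_abs_mul_sub_sq_mul_deriv2_right_endpoint (hσ : σ ≠ 0) (hab : a ≤ b)
    (hf : ∀ y ∈ Set.Icc a b, HasDerivAt f (f' y) y)
    (hf' : ∀ y ∈ Set.Icc a b, HasDerivAt f' (f'' y) y)
    (hf'' : IntervalIntegrable f'' MeasureTheory.volume a b) :
    ∫ y in a..b, exp (-|b - y| / σ) * (f y - σ ^ 2 * f'' y) =
      σ * (f b - σ * f' b) - σ * exp ((a - b) / σ) * (f a - σ * f' a) := by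
  rw [← Set.uIcc_of_le hab] at hf hf'
  have hexp : ∀ y ∈ Set.uIcc a b, exp (-|b - y| / σ) = exp ((y - b) / σ) := by
    intro y hy
    rw [Set.uIcc_of_le hab] at hy
    rw [abs_of_nonneg (sub_nonneg.2 hy.2), neg_sub]
  rw [integral_congr fun y hy ↦ congrArg (· * _) (hexp y hy),
    integral_exp_mul_sub_sq_mul_deriv2 hσ b hf hf' hf'', sub_self, zero_div, exp_zero, mul_one]

theorem integral_exp_neg_abs_mul_sub_sq_mul_deriv2_left_endpoint (hσ : σ ≠ 0) (hab : a ≤ b)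
    (hf : ∀ y ∈ Set.Icc a b, HasDerivAt f (f' y) y)
    (hf' : ∀ y ∈ Set.Icc a b, HasDerivAt f' (f'' y) y)
    (hf'' : IntervalIntegrable f'' MeasureTheory.volume a b) :
    ∫ y in a..b, exp (-|a - y| / σ) * (f y - σ ^ 2 * f'' y) =
      σ * (f a + σ * f' a) - σ * exp ((a - b) / σ) * (f b + σ * f' b) := by
  rw [← Set.uIcc_of_le hab] at hf hf'
  have hexp : ∀ y ∈ Set.uIcc a b, exp (-|a - y| / σ) = exp ((y - a) / -σ) := by
    intro y hy
    rw [Set.uIcc_of_le hab] at hy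
    rw [abs_of_nonpos (sub_nonpos.2 hy.1), neg_neg, div_neg, ← neg_div, neg_sub]
  have hneg := integral_exp_mul_sub_sq_mul_deriv2 (neg_ne_zero.2 hσ) a hf hf' hf''
  rw [sub_self, zero_div, exp_zero, neg_sq, div_neg, ← neg_div, neg_sub] at hneg
  rw [integral_congr fun y hy ↦ congrArg (· * _) (hexp y hy), hneg]
  ring

theorem integral_exp_neg_abs_mul_sub_sq_mul_deriv2 (hσ : σ ≠ 0) {x : ℝ} (hx : x ∈ Set.Icc a b)
    (hf : ∀ y ∈ Set.Icc a b, HasDerivAt f (f' y) y)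
    (hf' : ∀ y ∈ Set.Icc a b, HasDerivAt f' (f'' y) y)
    (hf'' : IntervalIntegrable f'' MeasureTheory.volume a b) :
    ∫ y in a..b, exp (-|x - y| / σ) * (f y - σ ^ 2 * f'' y) =
      2 * σ * f x - σ * exp ((a - x) / σ) * (f a - σ * f' a) -
        σ * exp ((x - b) / σ) * (f b + σ * f' b) := by
  have hleft : Set.Icc a x ⊆ Set.Icc a b := Set.Icc_subset_Icc_right hx.2
  have hright : Set.Icc x b ⊆ Set.Icc a b := Set.Icc_subset_Icc_left hx.1
  have huIcc_left : Set.uIcc a x ⊆ Set.uIcc a b :=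
    Set.uIcc_subset_uIcc_left (Set.Icc_subset_uIcc hx)
  have huIcc_right : Set.uIcc x b ⊆ Set.uIcc a b :=
    Set.uIcc_subset_uIcc_right (Set.Icc_subset_uIcc hx)
  have hf_int : IntervalIntegrable f MeasureTheory.volume a b :=
    (HasDerivAt.continuousOn hf).intervalIntegrable_of_Icc (hx.1.trans hx.2)
  have hint : IntervalIntegrable (fun y ↦ exp (-|x - y| / σ) * (f y - σ ^ 2 * f'' y))
      MeasureTheory.volume a b :=
    (hf_int.sub (hf''.const_mul _)).continuousOn_mul (by fun_prop)
  rw [← integral_add_adjacent_intervals (hint.mono_set huIcc_left) (hint.mono_set huIcc_right),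
    integral_exp_neg_abs_mul_sub_sq_mul_deriv2_right_endpoint hσ hx.1 (fun y hy ↦ hf y (hleft hy))
      (fun y hy ↦ hf' y (hleft hy)) (hf''.mono_set huIcc_left),
    integral_exp_neg_abs_mul_sub_sq_mul_deriv2_left_endpoint hσ hx.2 (fun y hy ↦ hf y (hright hy))
      (fun y hy ↦ hf' y (hright hy)) (hf''.mono_set huIcc_right)]
  ring

end GreenFunction

theorem sub_intervalAverage_eq_mul {a b r c : ℝ} {g φ : ℝ → ℝ} (hab : a ≠ b)
    (hg : ∀ x ∈ Set.uIcc a b, g x = r * φ x + c)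
    (hφ : IntervalIntegrable φ MeasureTheory.volume a b) (hφ_mean : ∫ y in a..b, φ y = 0)
    {x : ℝ} (hx : x ∈ Set.uIcc a b) :
    g x - ⨍ z in a..b, g z = r * φ x := by
  have havg : ⨍ z in a..b, g z = c := by
    rw [interval_average_eq, integral_congr hg,
      integral_add (hφ.const_mul r) intervalIntegrable_const, integral_const_mul, hφ_mean,
      mul_zero, zero_add, integral_const, inv_smul_smul₀ (sub_ne_zero.2 hab.symm)]
  rw [hg x hx, havg, add_sub_cancel_right]

theorem integral_cos_mul_sub_sin_div {k : ℝ} (hk : k ≠ 0) :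
    ∫ y in (-1 : ℝ)..1, (cos (k * y) - sin k / k) = 0 := by
  have hcos : ∫ y in (-1 : ℝ)..1, cos (k * y) = 2 * (sin k / k) := by
    rw [integral_comp_mul_left cos hk, integral_cos, mul_neg, mul_one, sin_neg, smul_eq_mul]
    ring
  rw [integral_sub (Continuous.intervalIntegrable (by fun_prop) _ _) intervalIntegrable_const,
    hcos, integral_const, smul_eq_mul]
  ring

theorem mul_sin_eq_mul_cos_of_tan_eq_div {k q : ℝ} (hk : k ≠ 0) (hq : q ≠ 0)
    (h : tan k = k / q) : q * sin k = k * cos k := by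
  -- Where `cos k = 0`, `tan k` has the junk value `0`, which the nonzero `k / q` rules out.
  have hcos : cos k ≠ 0 := by
    intro hcos
    rw [tan_eq_sin_div_cos, hcos, div_zero] at h
    exact div_ne_zero hk hq h.symm
  rw [← tan_mul_cos hcos, h, ← mul_assoc, mul_div_cancel₀ _ hq]

theorem integral_exp_neg_abs_mul_cos_mul_sub_sin_div {σ k x : ℝ} (hσ : σ ≠ 0) (hk : k ≠ 0)
    (hquant : (1 + σ * (1 + σ) * k ^ 2) * sin k = k * cos k) (hx : x ∈ Set.Icc (-1 : ℝ) 1) :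
    ∫ y in (-1 : ℝ)..1, exp (-|x - y| / σ) * (cos (k * y) - sin k / k) =
      2 * σ * (cos (k * x) / (1 + σ ^ 2 * k ^ 2) - sin k / k) := by
  have hD : 1 + σ ^ 2 * k ^ 2 ≠ 0 := by positivity
  set D := 1 + σ ^ 2 * k ^ 2 with hD_def
  let f : ℝ → ℝ := fun y ↦ cos (k * y) / D - sin k / k
  let f' : ℝ → ℝ := fun y ↦ -(k * sin (k * y)) / D
  let f'' : ℝ → ℝ := fun y ↦ -(k ^ 2 * cos (k * y)) / D
  have hlin (y : ℝ) : HasDerivAt (fun y ↦ k * y) k y := hasDerivAt_const_mul k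
  have hf (y : ℝ) : HasDerivAt f (f' y) y := by
    refine (((hlin y).cos.div_const D).sub_const _).congr_deriv ?_
    simp only [f']
    ring
  have hf' (y : ℝ) : HasDerivAt f' (f'' y) y := by
    refine (((hlin y).sin.const_mul k).neg.div_const D).congr_deriv ?_
    simp only [f'']
    ring
  have hf'' : IntervalIntegrable f'' MeasureTheory.volume (-1) 1 :=
    Continuous.intervalIntegrable (by fun_prop) _ _
  have hφ (y : ℝ) : cos (k * y) - sin k / k = f y - σ ^ 2 * f'' y := by
    simp only [f, f'']
    field_simp
    ring
  have hright : f 1 + σ * f' 1 = 0 := by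
    simp only [f, f', mul_one]
    field_simp
    linear_combination -hquant + sin k * hD_def
  have hleft : f (-1) - σ * f' (-1) = 0 := by
    rw [← hright]
    simp only [f, f', mul_neg, mul_one, cos_neg, sin_neg]
    ring
  simp only [hφ]
  rw [integral_exp_neg_abs_mul_sub_sq_mul_deriv2 hσ hx (fun y _ ↦ hf y) (fun y _ ↦ hf' y) hf'',
    hleft, hright, mul_zero, mul_zero, sub_zero, sub_zero]

theorem exponential_kernel_even_centered_eigenfunction_general {σ k : ℝ} (hσ : σ ≠ 0) (hk : k ≠ 0)
    (hquant : (1 + σ * (1 + σ) * k ^ 2) * sin k = k * cos k) :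
    let φ : ℝ → ℝ := fun y ↦ cos (k * y) - sin k / k
    (∀ x ∈ Set.Icc (-1 : ℝ) 1,
      (∫ y in (-1 : ℝ)..1, exp (-|x - y| / σ) * φ y) -
        (1 / 2) * ∫ z in (-1 : ℝ)..1, ∫ y in (-1 : ℝ)..1, exp (-|z - y| / σ) * φ y =
      (2 * σ / (1 + σ ^ 2 * k ^ 2)) * φ x) ∧
    ∫ y in (-1 : ℝ)..1, φ y = 0 := by
  intro φ
  have hφ_mean : ∫ y in (-1 : ℝ)..1, φ y = 0 := integral_cos_mul_sub_sin_div hk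
  have hφ : IntervalIntegrable φ MeasureTheory.volume (-1) 1 :=
    Continuous.intervalIntegrable (by fun_prop) _ _
  refine ⟨fun x hx ↦ ?_, hφ_mean⟩
  have hIcc : Set.uIcc (-1 : ℝ) 1 = Set.Icc (-1) 1 := Set.uIcc_of_le (by norm_num)
  have hH : ∀ z ∈ Set.uIcc (-1 : ℝ) 1, ∫ y in (-1 : ℝ)..1, exp (-|z - y| / σ) * φ y =
      2 * σ / (1 + σ ^ 2 * k ^ 2) * φ z +
        2 * σ * (1 / (1 + σ ^ 2 * k ^ 2) - 1) * (sin k / k) := by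
    intro z hz
    rw [integral_exp_neg_abs_mul_cos_mul_sub_sin_div hσ hk hquant (hIcc ▸ hz)]
    simp only [φ]
    ring
  have hPH := sub_intervalAverage_eq_mul (by norm_num) hH hφ hφ_mean (hIcc ▸ hx)
  rwa [interval_average_eq, smul_eq_mul, show ((1 : ℝ) - -1)⁻¹ = 1 / 2 by norm_num] at hPH

/-- Even-sector eigenfunction identity for the mean-centered exponential kernel operator
on `[−1,1]`: if `tan k = k/(1+σ(1+σ)k²)` with `k > 0`, then the mean-zero function
`φ(y) = cos(ky) − sin(k)/k` satisfies `(PHP)φ = (2σ/(1+σ²k²))·φ`, where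
`H` is convolution against `exp(−|·|/σ)` and `P` subtracts the mean. -/
theorem exponential_kernel_even_centered_eigenfunction (σ : ℝ) (hσ : 0 < σ) (k : ℝ)
    (hk : 0 < k) (hquant : Real.tan k = k / (1 + σ * (1 + σ) * k ^ 2)) :
    let φ : ℝ → ℝ := fun y => Real.cos (k * y) - Real.sin k / k
    (∀ x ∈ Set.Icc (-1 : ℝ) 1,
      (∫ y in (-1 : ℝ)..1, Real.exp (-|x - y| / σ) * φ y) -
        (1 / 2) * ∫ z in (-1 : ℝ)..1, ∫ y in (-1 : ℝ)..1, Real.exp (-|z - y| / σ) * φ y =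
      (2 * σ / (1 + σ ^ 2 * k ^ 2)) * φ x) ∧
    ∫ y in (-1 : ℝ)..1, φ y = 0 :=
  exponential_kernel_even_centered_eigenfunction_general hσ.ne' hk.ne'
    (mul_sin_eq_mul_cos_of_tan_eq_div hk.ne' (by positivity) hquant)
end

section
/- Let σ > 0 and let f : [−1, 1] → ℝ be continuous. Define u(x) = ∫_{−1}^{1} exp(−|x−y|/σ) f(y) dy. Then u is differentiable at the endpoints (one-sidedly) and satisfies the Robin boundary identities u'(1) = −(1/σ)·u(1) and u'(−1) = (1/σ)·u(−1). -/
open Real intervalIntegral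

open MeasureTheory Set

/-!
The kernel `exp (-|x - y| / σ)` is `1 / σ`-Lipschitz in `x` and differentiable off the diagonal,
so one may differentiate under the integral at any point that is not an atom, picking up the factor
`-sign (x - y) / σ`. At an endpoint of the interval this sign is constant for almost every `y`, and
the derivative becomes `∓1 / σ` times the integral itself.
-/

lemma lipschitzOnWith_exp_Iic (c : ℝ) : LipschitzOnWith (exp c).toNNReal exp (Iic c) :=
  (convex_Iic c).lipschitzOnWith_of_nnnorm_deriv_le (fun _ _ => differentiableAt_exp)
    fun x (hx : x ≤ c) => by
      rw [Real.deriv_exp, nnnorm_of_nonneg (exp_pos x).le, ← toNNReal_of_nonneg]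
      gcongr

lemma measurable_coe_sign : Measurable fun t : ℝ => (SignType.sign t : ℝ) :=
  funext deriv_abs ▸ measurable_deriv fun t : ℝ => |t|

lemma neg_abs_div_nonpos {σ : ℝ} (hσ : 0 ≤ σ) (t : ℝ) : -|t| / σ ≤ 0 :=
  div_nonpos_of_nonpos_of_nonneg (neg_nonpos.2 (abs_nonneg t)) hσ

lemma abs_exp_neg_abs_div_sub_le {σ : ℝ} (hσ : 0 ≤ σ) (s t : ℝ) :
    |exp (-|s| / σ) - exp (-|t| / σ)| ≤ |s - t| / σ := by
  calc |exp (-|s| / σ) - exp (-|t| / σ)|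
      ≤ |-|s| / σ - -|t| / σ| := by
        simpa [Real.dist_eq] using (lipschitzOnWith_exp_Iic 0).dist_le_mul
          _ (neg_abs_div_nonpos hσ s) _ (neg_abs_div_nonpos hσ t)
    _ = |(|s| - |t|)| / σ := by
        rw [← sub_div, abs_div, abs_of_nonneg hσ, neg_sub_neg, abs_sub_comm]
    _ ≤ |s - t| / σ := div_le_div_of_nonneg_right (abs_abs_sub_abs_le_abs_sub s t) hσ

lemma hasDerivAt_exp_neg_abs_div (σ : ℝ) {t : ℝ} (ht : t ≠ 0) :
    HasDerivAt (fun s => exp (-|s| / σ)) (-(SignType.sign t / σ) * exp (-|t| / σ)) t :=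
  ((hasDerivAt_abs ht).fun_neg.div_const σ).exp.congr_deriv (by ring)

section ExpKernelOperator

variable {E : Type*} [NormedAddCommGroup E] [NormedSpace ℝ E]

/-- The exponential kernel operator `H` of correlation length `σ`, applied to the vector measure
`f • μ`; the operator on an interval is obtained by restricting `μ` to it. For
`σ = 0` the convention `t / 0 = 0` makes the kernel identically `1`. -/
noncomputable def expKernelOperator (σ : ℝ) (μ : Measure ℝ) (f : ℝ → E) (x : ℝ) : E :=
  ∫ y, exp (-|x - y| / σ) • f y ∂μ

variable {σ : ℝ} {μ : Measure ℝ} {f : ℝ → E} {x₀ : ℝ}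

lemma integrable_exp_neg_abs_sub_div_smul (hσ : 0 ≤ σ) (hf : Integrable f μ) (x : ℝ) :
    Integrable (fun y => exp (-|x - y| / σ) • f y) μ := by
  refine hf.bdd_smul 1 (by fun_prop) (.of_forall fun y => ?_)
  rw [norm_eq_abs, abs_exp, exp_le_one_iff]
  exact neg_abs_div_nonpos hσ _

theorem hasDerivAt_expKernelOperator (hσ : 0 ≤ σ) (hf : Integrable f μ)
    (hx₀ : ∀ᵐ y ∂μ, y ≠ x₀) :
    HasDerivAt (expKernelOperator σ μ f)
      (∫ y, (-(SignType.sign (x₀ - y) / σ) * exp (-|x₀ - y| / σ)) • f y ∂μ) x₀ := by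
  have hint := integrable_exp_neg_abs_sub_div_smul hσ hf
  have hmeas : AEStronglyMeasurable
      (fun y => (-(SignType.sign (x₀ - y) / σ) * exp (-|x₀ - y| / σ)) • f y) μ := by
    have hsign : Measurable fun y : ℝ => (SignType.sign (x₀ - y) : ℝ) :=
      measurable_coe_sign.comp (by fun_prop)
    exact AEStronglyMeasurable.smul (by fun_prop) hf.1
  have hlip (y : ℝ) : LipschitzOnWith (nnabs (‖f y‖ / σ))
      (fun x => exp (-|x - y| / σ) • f y) univ := by
    refine .of_dist_le_mul fun x _ z _ => ?_
    calc dist (exp (-|x - y| / σ) • f y) (exp (-|z - y| / σ) • f y)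
        = |exp (-|x - y| / σ) - exp (-|z - y| / σ)| * ‖f y‖ := by
          rw [dist_eq_norm, ← sub_smul, norm_smul, norm_eq_abs]
      _ ≤ |x - y - (z - y)| / σ * ‖f y‖ := by
          gcongr
          exact abs_exp_neg_abs_div_sub_le hσ _ _
      _ = nnabs (‖f y‖ / σ) * dist x z := by
          rw [sub_sub_sub_cancel_right, coe_nnabs, Real.dist_eq,
            abs_of_nonneg (div_nonneg (norm_nonneg _) hσ)]
          ring
  refine (hasDerivAt_integral_of_dominated_loc_of_lip Filter.univ_mem
    (.of_forall fun x => (hint x).1) (hint x₀) hmeas (.of_forall hlip) (hf.norm.div_const σ) ?_).2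
  filter_upwards [hx₀] with y hy
  exact ((hasDerivAt_exp_neg_abs_div σ (sub_ne_zero.2 hy.symm)).comp_sub_const x₀ y).smul_const _

theorem hasDerivAt_expKernelOperator_of_ae_lt (hσ : 0 ≤ σ) (hf : Integrable f μ)
    (hx₀ : ∀ᵐ y ∂μ, y < x₀) :
    HasDerivAt (expKernelOperator σ μ f) (-(1 / σ) • expKernelOperator σ μ f x₀) x₀ := by
  refine (hasDerivAt_expKernelOperator hσ hf (hx₀.mono fun _ => ne_of_lt)).congr_deriv ?_
  rw [expKernelOperator, ← MeasureTheory.integral_smul]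
  refine integral_congr_ae (hx₀.mono fun y hy => ?_)
  simp only [sign_pos (sub_pos.2 hy), SignType.coe_one, mul_smul]

theorem hasDerivAt_expKernelOperator_of_ae_gt (hσ : 0 ≤ σ) (hf : Integrable f μ)
    (hx₀ : ∀ᵐ y ∂μ, x₀ < y) :
    HasDerivAt (expKernelOperator σ μ f) ((1 / σ) • expKernelOperator σ μ f x₀) x₀ := by
  refine (hasDerivAt_expKernelOperator hσ hf (hx₀.mono fun _ => ne_of_gt)).congr_deriv ?_
  rw [expKernelOperator, ← MeasureTheory.integral_smul]
  refine integral_congr_ae (hx₀.mono fun y hy => ?_)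
  simp only [sign_neg (sub_neg.2 hy), SignType.coe_neg_one, neg_div, neg_neg, mul_smul]

theorem exponential_kernel_robin_boundary_general {μ : Measure ℝ} [NullSingletonClass μ]
    {σ a b : ℝ} (hσ : 0 < σ) (hab : a ≤ b) {f : ℝ → E} (hf : IntervalIntegrable f μ a b) :
    let u : ℝ → E := fun x => ∫ y in a..b, exp (-|x - y| / σ) • f y ∂μ
    HasDerivAt u (-(1 / σ) • u b) b ∧ HasDerivAt u ((1 / σ) • u a) a := by
  intro u
  -- Discarding the null right endpoint leaves `Ioo a b`, which lies strictly on one side of each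
  -- of `a` and `b`.
  have hu : u = expKernelOperator σ (μ.restrict (Ioo a b)) f :=
    funext fun x => (integral_of_le hab).trans integral_Ioc_eq_integral_Ioo
  have hf' : IntegrableOn f (Ioo a b) μ := (intervalIntegrable_iff_integrableOn_Ioo_of_le hab).1 hf
  have mem_Ioo : ∀ᵐ y ∂μ.restrict (Ioo a b), y ∈ Ioo a b := ae_restrict_mem measurableSet_Ioo
  rw [hu]
  exact ⟨hasDerivAt_expKernelOperator_of_ae_lt hσ.le hf' (mem_Ioo.mono fun _ hy => hy.2),
    hasDerivAt_expKernelOperator_of_ae_gt hσ.le hf' (mem_Ioo.mono fun _ hy => hy.1)⟩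

end ExpKernelOperator

/-- Robin boundary identities for the image of the exponential kernel operator:
if `f` is continuous on `[−1,1]` and `u(x) = ∫_{−1}^1 exp(−|x−y|/σ) f(y) dy`, then `u`
has one-sided derivatives at the endpoints satisfying `u'(1) = −(1/σ)·u(1)` and
`u'(−1) = (1/σ)·u(−1)`. -/
theorem exponential_kernel_robin_boundary (σ : ℝ) (hσ : 0 < σ) (f : ℝ → ℝ)
    (hf : ContinuousOn f (Set.Icc (-1 : ℝ) 1)) :
    let u : ℝ → ℝ := fun x => ∫ y in (-1 : ℝ)..1, Real.exp (-|x - y| / σ) * f y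
    HasDerivWithinAt u (-(1 / σ) * u 1) (Set.Iic (1 : ℝ)) 1 ∧
      HasDerivWithinAt u ((1 / σ) * u (-1)) (Set.Ici (-1 : ℝ)) (-1) :=
  have hab : (-1 : ℝ) ≤ 1 := by norm_num
  (exponential_kernel_robin_boundary_general hσ hab (hf.intervalIntegrable_of_Icc hab)).imp
    HasDerivAt.hasDerivWithinAt HasDerivAt.hasDerivWithinAt
end

section
/- Let σ > 0 and let μ be an even positive integer. Then there exists a unique k > 0 satisfying k = μπ/2 + arctan( k / (1 + σ(1+σ)k²) ). Moreover this k lies in the open interval (μπ/2, (μ+1)π/2) and satisfies tan k = k / (1 + σ(1+σ)k²). -/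
open Real

/-!
For `c ≥ 0` the map `k ↦ k - arctan (k / (1 + c k²))` has derivative
`k² (1 + 3c + c²k²) / ((1 + c k²)² + k²)`, so it is strictly increasing on `[0, ∞)`. Since the
arctangent takes values in `[0, π/2)` there, the map attains each value `A ≥ 0` exactly once, in
`[A, A + π/2]`. For even `μ` the offset `A = μπ/2` is a period of the tangent.
-/

/-- The phase `arctan (k / (1 + c k²))` on the right-hand side of the quantization condition;
the even sector is `c = σ(1 + σ)`. -/
noncomputable def phaseShift (c k : ℝ) : ℝ := arctan (k / (1 + c * k ^ 2))

section PhaseShift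

variable {c k A : ℝ}

theorem hasDerivAt_phaseShift (h : 1 + c * k ^ 2 ≠ 0) :
    HasDerivAt (phaseShift c) ((1 - c * k ^ 2) / ((1 + c * k ^ 2) ^ 2 + k ^ 2)) k := by
  have hdenom : HasDerivAt (fun x : ℝ ↦ 1 + c * x ^ 2) (c * (2 * k)) k := by
    simpa using ((hasDerivAt_pow 2 k).const_mul c).const_add 1
  have hratio : 1 + (k / (1 + c * k ^ 2)) ^ 2 =
      ((1 + c * k ^ 2) ^ 2 + k ^ 2) / (1 + c * k ^ 2) ^ 2 := by
    rw [add_div, div_self (pow_ne_zero 2 h), div_pow]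
  refine ((hasDerivAt_id k).div hdenom h).arctan.congr_deriv ?_
  simp only [id_eq, Pi.div_apply, hratio]
  rw [one_div_div, mul_comm, div_mul_div_cancel₀ (pow_ne_zero 2 h)]
  ring

theorem continuous_phaseShift (hc : 0 ≤ c) : Continuous (phaseShift c) :=
  continuous_iff_continuousAt.2 fun k ↦
    (hasDerivAt_phaseShift (by positivity : 1 + c * k ^ 2 ≠ 0)).continuousAt

theorem phaseShift_nonneg (hc : 0 ≤ c) (hk : 0 ≤ k) : 0 ≤ phaseShift c k :=
  arctan_nonneg.2 (by positivity)

theorem phaseShift_pos (hc : 0 ≤ c) (hk : 0 < k) : 0 < phaseShift c k :=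
  arctan_pos.2 (by positivity)

theorem phaseShift_lt_pi_div_two (c k : ℝ) : phaseShift c k < π / 2 :=
  arctan_lt_pi_div_two _

theorem strictMonoOn_sub_phaseShift (hc : 0 ≤ c) :
    StrictMonoOn (fun k ↦ k - phaseShift c k) (Set.Ici 0) := by
  refine strictMonoOn_of_hasDerivWithinAt_pos (convex_Ici 0)
    (continuous_id.sub (continuous_phaseShift hc)).continuousOn
    (fun k _ ↦ ((hasDerivAt_id k).sub
      (hasDerivAt_phaseShift (by positivity))).hasDerivWithinAt) fun k hk ↦ ?_
  have hk : 0 < k := by simpa using hk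
  rw [sub_pos, div_lt_one (by positivity)]
  have hgap : 0 < k ^ 2 * (1 + 3 * c + c ^ 2 * k ^ 2) := by positivity
  linarith

theorem exists_mem_Icc_sub_phaseShift_eq (hc : 0 ≤ c) (hA : 0 ≤ A) :
    ∃ k ∈ Set.Icc A (A + π / 2), k - phaseShift c k = A := by
  have hcont : Continuous fun k ↦ k - phaseShift c k :=
    continuous_id.sub (continuous_phaseShift hc)
  refine intermediate_value_Icc (by linarith [pi_pos]) hcont.continuousOn ⟨?_, ?_⟩
  · linarith [phaseShift_nonneg hc hA]
  · linarith [phaseShift_lt_pi_div_two c (A + π / 2)]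

theorem existsUnique_pos_eq_add_phaseShift (hc : 0 ≤ c) (hA : 0 < A) :
    ∃! k, 0 < k ∧ k = A + phaseShift c k := by
  obtain ⟨k, hk, hkA⟩ := exists_mem_Icc_sub_phaseShift_eq hc hA.le
  have hk0 : 0 < k := hA.trans_le hk.1
  refine ⟨k, ⟨hk0, sub_eq_iff_eq_add.1 hkA⟩, fun y ⟨hy0, hy⟩ ↦ ?_⟩
  exact (strictMonoOn_sub_phaseShift hc).injOn hy0.le hk0.le
    ((sub_eq_iff_eq_add.2 hy).trans hkA.symm)

theorem mem_Ioo_of_eq_add_phaseShift (hc : 0 ≤ c) (hk : 0 < k) (h : k = A + phaseShift c k) :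
    k ∈ Set.Ioo A (A + π / 2) :=
  ⟨by linarith [phaseShift_pos hc hk], by linarith [phaseShift_lt_pi_div_two c k]⟩

theorem tan_sub_of_eq_add_phaseShift (h : k = A + phaseShift c k) :
    tan (k - A) = k / (1 + c * k ^ 2) := by
  rw [sub_eq_iff_eq_add'.2 h, phaseShift, tan_arctan]

end PhaseShift

theorem tan_sub_even_mul_pi_div_two {n : ℕ} (hn : Even n) (x : ℝ) :
    tan (x - n * π / 2) = tan x := by
  obtain ⟨m, rfl⟩ := hn
  rw [← tan_sub_nat_mul_pi x m]
  congr 2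
  push_cast
  ring

theorem even_sector_quantization_general {c A : ℝ} (hc : 0 ≤ c) (hA : 0 < A) :
    (∃! k : ℝ, 0 < k ∧ k = A + arctan (k / (1 + c * k ^ 2))) ∧
    ∀ k : ℝ, 0 < k → k = A + arctan (k / (1 + c * k ^ 2)) →
      k ∈ Set.Ioo A (A + π / 2) ∧ tan (k - A) = k / (1 + c * k ^ 2) :=
  ⟨existsUnique_pos_eq_add_phaseShift hc hA, fun _ hk h ↦
    ⟨mem_Ioo_of_eq_add_phaseShift hc hk h, tan_sub_of_eq_add_phaseShift h⟩⟩

/-- Even-sector self-consistent quantization condition: for `σ > 0` and even positive `μ`,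
there is a unique `k > 0` with `k = μπ/2 + arctan(k/(1+σ(1+σ)k²))`; moreover this `k` lies
in `(μπ/2, (μ+1)π/2)` and satisfies `tan k = k/(1+σ(1+σ)k²)`. -/
theorem even_sector_quantization (σ : ℝ) (hσ : 0 < σ) (μ : ℕ) (hμpos : 0 < μ)
    (hμeven : Even μ) :
    (∃! k : ℝ, 0 < k ∧
      k = (μ : ℝ) * Real.pi / 2 + Real.arctan (k / (1 + σ * (1 + σ) * k ^ 2))) ∧
    ∀ k : ℝ, 0 < k →
      k = (μ : ℝ) * Real.pi / 2 + Real.arctan (k / (1 + σ * (1 + σ) * k ^ 2)) →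
      k ∈ Set.Ioo ((μ : ℝ) * Real.pi / 2) (((μ : ℝ) + 1) * Real.pi / 2) ∧
        Real.tan k = k / (1 + σ * (1 + σ) * k ^ 2) := by
  have hright : ((μ : ℝ) + 1) * π / 2 = μ * π / 2 + π / 2 := by ring
  simpa only [hright, tan_sub_even_mul_pi_div_two hμeven] using
    even_sector_quantization_general (c := σ * (1 + σ)) (A := μ * π / 2)
      (by positivity) (by positivity)
end

section
/- Let M be a positive integer, set L = 2M+1, and let n be an integer with 1 ≤ n ≤ M. Then ∑_{x=−M}^{M} x · sin(2πnx/L) = (−1)^{n+1} · L / (2·sin(πn/L)). -/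
open Finset Real

/-!
Put `L = 2M + 1`. Differentiating the Dirichlet kernel identity
`sin a · ∑ cos (2xa) = sin (L a)` in `a` expresses `2 sin a · ∑ x sin (2xa)` through the kernel
itself and `L cos (L a)`. At `a = πn/L` the kernel vanishes and `cos (L a) = (-1) ^ n`.
-/

theorem sin_mul_sum_Icc_cos (m : ℕ) (a : ℝ) :
    sin a * ∑ x ∈ Icc (-(m : ℤ)) m, cos (2 * x * a) = sin ((2 * m + 1) * a) := by
  have product_eq_diff (x : ℤ) : 2 * sin a * cos (2 * x * a) =
      -sin ((2 * x - 1) * a) - -sin ((2 * (x + 1 : ℤ) - 1) * a) := by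
    rw [two_mul_sin_mul_cos, ← sin_neg]
    push_cast
    ring_nf
  have reflect : sin ((2 * (-m : ℤ) - 1) * a) = -sin ((2 * m + 1) * a) := by
    rw [← sin_neg]
    push_cast
    ring_nf
  have telescoped : 2 * sin a * ∑ x ∈ Icc (-(m : ℤ)) m, cos (2 * x * a) =
      2 * sin ((2 * m + 1) * a) := by
    simp only [mul_sum, product_eq_diff]
    rw [sum_Icc_eq_sum_Ico_add _ (by omega),
      sum_Ico_int_sub m fun x : ℤ ↦ -sin ((2 * x - 1) * a), reflect]
    push_cast
    ring_nf
  linear_combination telescoped / 2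

theorem hasDerivAt_sum_cos {ι : Type*} (s : Finset ι) (ω : ι → ℝ) (a : ℝ) :
    HasDerivAt (fun a : ℝ ↦ ∑ i ∈ s, cos (ω i * a)) (-∑ i ∈ s, ω i * sin (ω i * a)) a := by
  rw [← sum_neg_distrib]
  refine HasDerivAt.fun_sum fun i _ ↦ ?_
  have deriv_cos := ((hasDerivAt_id' a).const_mul (ω i)).cos
  exact deriv_cos.congr_deriv (by ring)

theorem two_mul_sin_mul_sum_Icc_mul_sin (m : ℕ) (a : ℝ) :
    2 * sin a * ∑ x ∈ Icc (-(m : ℤ)) m, (x : ℝ) * sin (2 * x * a) =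
      cos a * ∑ x ∈ Icc (-(m : ℤ)) m, cos (2 * x * a) - (2 * m + 1) * cos ((2 * m + 1) * a) := by
  have deriv_product := (hasDerivAt_sin a).fun_mul
    (hasDerivAt_sum_cos (Icc (-(m : ℤ)) m) (fun x ↦ 2 * x) a)
  have deriv_closed_form := ((hasDerivAt_id' a).const_mul (2 * (m : ℝ) + 1)).sin
  simp only [sin_mul_sum_Icc_cos] at deriv_product
  have derivatives_eq := deriv_product.unique deriv_closed_form
  simp only [mul_assoc, ← mul_sum] at derivatives_eq ⊢
  linear_combination -derivatives_eq

theorem sin_pi_mul_int_div_eq_zero_iff {k : ℤ} (hk : k ≠ 0) (n : ℤ) :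
    sin (π * n / k) = 0 ↔ k ∣ n := by
  have hk_real : (k : ℝ) ≠ 0 := Int.cast_ne_zero.mpr hk
  have multiple_iff (j : ℤ) : j * π = π * n / k ↔ n = k * j := by
    rw [eq_div_iff hk_real, mul_right_comm, mul_comm _ π, mul_right_inj' pi_ne_zero]
    norm_cast
    rw [eq_comm, mul_comm]
  simp only [sin_eq_zero_iff, multiple_iff, dvd_def]

theorem coordinate_fourier_overlap_general (M : ℕ) (n : ℤ) (hn : ¬ (2 * M + 1 : ℤ) ∣ n) :
    ∑ x ∈ Icc (-(M : ℤ)) M, (x : ℝ) * sin (2 * π * n * x / (2 * M + 1)) =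
      (-1 : ℝ) ^ (n + 1) * (2 * M + 1) / (2 * sin (π * n / (2 * M + 1))) := by
  set a : ℝ := π * n / (2 * M + 1) with ha
  have sin_ne_zero : sin a ≠ 0 := by
    simpa [ha] using (sin_pi_mul_int_div_eq_zero_iff (by omega) n).not.mpr hn
  have angle_eq : (2 * M + 1) * a = n * π := by
    rw [ha]
    field_simp
  have kernel_eq_zero : ∑ x ∈ Icc (-(M : ℤ)) M, cos (2 * x * a) = 0 := by
    have product_eq_zero := sin_mul_sum_Icc_cos M a
    rw [angle_eq, sin_int_mul_pi] at product_eq_zero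
    exact (mul_eq_zero.mp product_eq_zero).resolve_left sin_ne_zero
  have mode_eq (x : ℤ) : 2 * π * n * x / (2 * M + 1) = 2 * x * a := by
    rw [ha]
    ring
  have overlap := two_mul_sin_mul_sum_Icc_mul_sin M a
  rw [kernel_eq_zero, angle_eq, cos_int_mul_pi] at overlap
  simp only [mode_eq]
  rw [eq_div_iff (mul_ne_zero two_ne_zero sin_ne_zero), zpow_add_one₀ (by norm_num)]
  linear_combination overlap

/-- Overlap of the linear coordinate with a lattice Fourier mode on the odd lattice
`{−M,…,M}` (`L = 2M+1`): for `1 ≤ n ≤ M`,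
`∑_{x=−M}^{M} x·sin(2πnx/L) = (−1)^{n+1}·L/(2 sin(πn/L))`. -/
theorem coordinate_fourier_overlap (M : ℕ) (hM : 0 < M) (n : ℕ) (hn1 : 1 ≤ n)
    (hnM : n ≤ M) :
    ∑ x ∈ Finset.Icc (-(M : ℤ)) (M : ℤ),
        (x : ℝ) * Real.sin (2 * Real.pi * n * x / (2 * M + 1)) =
      (-1 : ℝ) ^ (n + 1) * (2 * M + 1) / (2 * Real.sin (Real.pi * n / (2 * M + 1))) := by
  have not_dvd : ¬ (2 * M + 1 : ℤ) ∣ n := by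
    exact_mod_cast Nat.not_dvd_of_pos_of_lt hn1 (by omega : n < 2 * M + 1)
  exact_mod_cast coordinate_fourier_overlap_general M n not_dvd
end

section
/- Let M be a positive integer, set L = 2M+1, and let R be an integer with 1 ≤ R < M. Then ∑_{n=R+1}^{M} 1/sin²(πn/L) ≤ L²/(π²·R). -/
open Finset Real

/-!
With `θ = π / L`, the cosecant sum times `θ` is a lower Riemann sum for the integral of `1 / sin²`
over `[θR, θM]`, because `1 / sin²` decreases on `(0, π / 2]`. This integral equals
`cot (θR) - cot (θM)`, which is at most `cot (θR) ≤ 1 / (θR)`.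
-/

theorem hasDerivAt_cot {x : ℝ} (hx : sin x ≠ 0) : HasDerivAt cot (-(1 / sin x ^ 2)) x := by
  have cot_eq : cot = fun t ↦ cos t / sin t := funext cot_eq_cos_div_sin
  rw [cot_eq]
  refine ((hasDerivAt_cos x).fun_div (hasDerivAt_sin x) hx).congr_deriv ?_
  rw [← sin_sq_add_cos_sq x]
  ring

theorem integral_one_div_sin_sq {a b : ℝ} (h : ∀ x ∈ Set.uIcc a b, sin x ≠ 0) :
    ∫ x in a..b, 1 / sin x ^ 2 = cot a - cot b := by
  have continuousOn_csc_sq : ContinuousOn (fun x ↦ 1 / sin x ^ 2) (Set.uIcc a b) :=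
    continuousOn_const.div (by fun_prop) fun x hx ↦ pow_ne_zero 2 (h x hx)
  rw [intervalIntegral.integral_eq_sub_of_hasDerivAt (f := fun x ↦ -cot x)
    (fun x hx ↦ by simpa only [neg_neg] using (hasDerivAt_cot (h x hx)).fun_neg)
    continuousOn_csc_sq.intervalIntegrable]
  ring

theorem antitoneOn_one_div_sin_sq :
    AntitoneOn (fun x ↦ 1 / sin x ^ 2) (Set.Ioc 0 (π / 2)) := by
  intro x hx y hy hxy
  have sin_x_pos : 0 < sin x := sin_pos_of_pos_of_lt_pi hx.1 (by linarith [hx.2, pi_pos])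
  have sin_x_le_sin_y : sin x ≤ sin y :=
    sin_le_sin_of_le_of_le_pi_div_two (by linarith [hx.1, pi_pos]) hy.2 hxy
  dsimp only
  gcongr

theorem cot_nonneg_of_nonneg_of_le_pi_div_two {x : ℝ} (hx₀ : 0 ≤ x) (hx : x ≤ π / 2) :
    0 ≤ cot x := by
  rw [cot_eq_cos_div_sin]
  exact div_nonneg (cos_nonneg_of_neg_pi_div_two_le_of_le (by linarith [pi_pos]) hx)
    (sin_nonneg_of_nonneg_of_le_pi hx₀ (by linarith [pi_pos]))

theorem cot_le_inv_of_pos_of_le_pi {x : ℝ} (hx₀ : 0 < x) (hx : x ≤ π) : cot x ≤ x⁻¹ := by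
  rcases lt_or_ge x (π / 2) with hx_lt | hx_ge
  · rw [← tan_inv_eq_cot]
    exact inv_anti₀ hx₀ (le_tan hx₀.le hx_lt)
  · rw [cot_eq_cos_div_sin]
    calc cos x / sin x ≤ 0 := div_nonpos_of_nonpos_of_nonneg
          (cos_nonpos_of_pi_div_two_le_of_le hx_ge (by linarith [pi_pos]))
          (sin_nonneg_of_nonneg_of_le_pi hx₀.le hx)
      _ ≤ x⁻¹ := inv_nonneg.2 hx₀.le

theorem mul_sum_one_div_sin_sq_le_cot_sub_cot {θ : ℝ} (hθ : 0 < θ) {R M : ℕ} (hR : 0 < R)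
    (hRM : R ≤ M) (hθM : θ * M ≤ π / 2) :
    θ * ∑ n ∈ Icc (R + 1) M, 1 / sin (θ * n) ^ 2 ≤ cot (θ * R) - cot (θ * M) := by
  have θR_pos : 0 < θ * R := by positivity
  have θR_le_θM : θ * R ≤ θ * M := by gcongr
  have antitoneOn_comp : AntitoneOn (fun t : ℝ ↦ 1 / sin (θ * t) ^ 2) (Set.Icc R M) :=
    antitoneOn_one_div_sin_sq.comp_MonotoneOn (fun s _ t _ hst ↦ by gcongr)
      fun t ht ↦ ⟨θR_pos.trans_le (by gcongr; exact ht.1), le_trans (by gcongr; exact ht.2) hθM⟩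
  have sin_ne_zero : ∀ x ∈ Set.uIcc (θ * R) (θ * M), sin x ≠ 0 := by
    intro x hx
    rw [Set.uIcc_of_le θR_le_θM] at hx
    exact (sin_pos_of_pos_of_lt_pi (by linarith [hx.1]) (by linarith [hx.2, pi_pos])).ne'
  calc θ * ∑ n ∈ Icc (R + 1) M, 1 / sin (θ * n) ^ 2
      = θ * ∑ n ∈ Ico R M, 1 / sin (θ * (n + 1 : ℕ)) ^ 2 := by
        rw [sum_Ico_add' (fun n : ℕ ↦ 1 / sin (θ * n) ^ 2), Ico_add_one_right_eq_Icc]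
    _ ≤ θ * ∫ t in (R : ℝ)..M, 1 / sin (θ * t) ^ 2 := by
        gcongr
        exact antitoneOn_comp.sum_le_integral_Ico hRM
    _ = ∫ x in θ * R..θ * M, 1 / sin x ^ 2 :=
        intervalIntegral.mul_integral_comp_mul_left (f := fun x ↦ 1 / sin x ^ 2) θ
    _ = cot (θ * R) - cot (θ * M) := integral_one_div_sin_sq sin_ne_zero

theorem cosecant_tail_bound_general {L : ℝ} {R M : ℕ} (hR : 0 < R) (hRM : R ≤ M)
    (hML : 2 * M ≤ L) :
    ∑ n ∈ Icc (R + 1) M, 1 / sin (π * n / L) ^ 2 ≤ L ^ 2 / (π ^ 2 * R) := by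
  have M_pos : (0 : ℝ) < M := mod_cast hR.trans_le hRM
  have L_pos : 0 < L := by linarith
  have θ_pos : 0 < π / L := by positivity
  have θM_le : π / L * M ≤ π / 2 := by
    rw [div_mul_eq_mul_div, div_le_div_iff₀ L_pos two_pos, mul_assoc, mul_comm (M : ℝ)]
    gcongr
  have θR_le : π / L * R ≤ π / L * M := by gcongr
  simp only [mul_div_right_comm]
  refine le_of_mul_le_mul_left ?_ θ_pos
  calc π / L * ∑ n ∈ Icc (R + 1) M, 1 / sin (π / L * n) ^ 2
      ≤ cot (π / L * R) - cot (π / L * M) :=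
        mul_sum_one_div_sin_sq_le_cot_sub_cot θ_pos hR hRM θM_le
    _ ≤ cot (π / L * R) :=
        sub_le_self _ (cot_nonneg_of_nonneg_of_le_pi_div_two (by positivity) θM_le)
    _ ≤ (π / L * R)⁻¹ := cot_le_inv_of_pos_of_le_pi (by positivity) (by linarith [pi_pos])
    _ = π / L * (L ^ 2 / (π ^ 2 * R)) := by field_simp

/-- Cosecant tail bound: for `L = 2M+1` and `1 ≤ R < M`,
`∑_{n=R+1}^{M} 1/sin²(πn/L) ≤ L²/(π²R)`. -/
theorem cosecant_tail_bound (M : ℕ) (hM : 0 < M) (R : ℕ) (hR1 : 1 ≤ R) (hRM : R < M) :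
    ∑ n ∈ Finset.Icc (R + 1) M, 1 / Real.sin (Real.pi * n / (2 * M + 1)) ^ 2 ≤
      (2 * M + 1 : ℝ) ^ 2 / (Real.pi ^ 2 * R) :=
  cosecant_tail_bound_general hR1 hRM.le (by linarith)
end

section
/- Let N and d be positive integers, let K_t : ZMod N → ℝ be even (K_t(−j) = K_t(j)), let A ∈ ℝ and β : {1, …, d} → ℝ. Define the matrix M indexed by pairs (x, a) with x ∈ ZMod N and a ∈ {−1, +1}^d by M((x,a),(y,b)) = K_t(x−y) + A + ∑_{r=1}^{d} β_r a_r b_r. For k ∈ ZMod N and S ⊆ {1, …, d} define Φ_{k,S}(x, a) = exp(2πi k x / N) · ∏_{r∈S} a_r, and define μ_k = ∑_{j ∈ ZMod N} exp(2πi k j / N) K_t(j). Then each Φ_{k,S} is an eigenvector of M, with eigenvalue: 2^d μ_0 + A·N·2^d if k = 0 and S = ∅; 2^d μ_k if k ≠ 0 and S = ∅; N·2^d·β_r if k = 0 and S = {r}; and 0 in all other cases. -/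
open Finset Complex

/-!
The matrix is `K ⊗ J + J ⊗ B`, where `K` is the circulant matrix of the seasonal kernel, `J` is
the all-ones matrix on either factor, and `B = A J + ∑ r, β r χ_r χ_rᵀ` with `χ_r a = a r`. An
additive character is an eigenvector of `K` (translation invariance) and of `J` (its sum vanishes
unless it is trivial). Walsh characters are orthogonal, and `J` and `χ_r χ_rᵀ` are the rank-one
matrices of the Walsh characters of `∅` and `{r}`, so `B` is already given by its spectral
decomposition. Tensor products of these common eigenvectors diagonalise the sum.
-/

open scoped Kronecker Matrix

section Tensor

variable {l m n o R : Type*} [CommSemiring R]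

/-- The elementary tensor `u ⊗ v`, encoded as a vector indexed by pairs. -/
def tensorVec (u : l → R) (v : m → R) : l × m → R := fun p => u p.1 * v p.2

lemma smul_tensorVec_smul (α γ : R) (u : l → R) (v : m → R) :
    tensorVec (α • u) (γ • v) = (α * γ) • tensorVec u v := by
  ext p
  simp only [tensorVec, Pi.smul_apply, smul_eq_mul]
  ring

variable [Fintype l] [Fintype m]

lemma kronecker_mulVec_tensorVec (P : Matrix n l R) (Q : Matrix o m R) (u : l → R) (v : m → R) :
    (P ⊗ₖ Q) *ᵥ tensorVec u v = tensorVec (P *ᵥ u) (Q *ᵥ v) := by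
  ext p
  simp only [tensorVec, Matrix.mulVec, dotProduct, Matrix.kroneckerMap_apply,
    Fintype.sum_mul_sum, Fintype.sum_prod_type, mul_mul_mul_comm]

lemma kronecker_mulVec_tensorVec_of_eigen {P : Matrix l l R} {Q : Matrix m m R} {u : l → R}
    {v : m → R} {α γ : R} (hP : P *ᵥ u = α • u) (hQ : Q *ᵥ v = γ • v) :
    (P ⊗ₖ Q) *ᵥ tensorVec u v = (α * γ) • tensorVec u v := by
  rw [kronecker_mulVec_tensorVec, hP, hQ, smul_tensorVec_smul]

end Tensor

section Circulant

variable {G R : Type*} [AddGroup G] [Fintype G] [CommSemiring R]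

/-- The Fourier coefficient of a kernel `K` at a character `ψ`, with the sign that makes it the
eigenvalue at `ψ` of the circulant matrix `K (x - y)`. -/
def kernelTransform (K : G → R) (ψ : AddChar G R) : R := ∑ j, K j * ψ (-j)

lemma kernelTransform_of_even {K : G → R} (hK : ∀ j, K (-j) = K j) (ψ : AddChar G R) :
    kernelTransform K ψ = ∑ j, ψ j * K j :=
  Fintype.sum_equiv (Equiv.neg G) _ _ fun j => by rw [Equiv.neg_apply, hK, mul_comm]

lemma circulant_mulVec_addChar (K : G → R) (ψ : AddChar G R) :
    Matrix.circulant K *ᵥ ψ = kernelTransform K ψ • ⇑ψ := by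
  ext x
  simp only [Matrix.mulVec, dotProduct, Matrix.circulant_apply, kernelTransform, Pi.smul_apply,
    smul_eq_mul, Finset.sum_mul]
  refine Fintype.sum_equiv (Equiv.subLeft x) _ _ fun y => ?_
  rw [Equiv.subLeft_apply, mul_assoc, ← AddChar.map_add_eq_mul, neg_sub, sub_add_cancel]

lemma vecMulVec_one_one_mulVec_addChar [IsDomain R] (ψ : AddChar G R) [Decidable (ψ = 0)] :
    Matrix.vecMulVec 1 1 *ᵥ ψ = (if ψ = 0 then (Fintype.card G : R) else 0) • ⇑ψ := by
  rw [Matrix.vecMulVec_mulVec, one_dotProduct, AddChar.sum_eq_ite, op_smul_eq_smul]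
  split_ifs with hψ
  · rw [hψ, AddChar.coe_zero]
  · rw [zero_smul, zero_smul]

end Circulant

section Walsh

/-- The two values `±1` of a binary attribute, as a subtype of `ℤ`. -/
abbrev SignValue : Type := {x : ℤ // x ∈ ({-1, 1} : Finset ℤ)}

lemma SignValue.cast_mul_self (R : Type*) [Ring R] (s : SignValue) :
    ((s : ℤ) : R) * ((s : ℤ) : R) = 1 := by
  obtain ⟨s, hs⟩ := s
  rcases (by simpa using hs : s = -1 ∨ s = 1) with rfl | rfl <;> simp

lemma SignValue.sum_eq {M : Type*} [AddCommMonoid M] (f : ℤ → M) :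
    ∑ s : SignValue, f s = f (-1) + f 1 := by
  rw [Finset.sum_coe_sort ({-1, 1} : Finset ℤ) f, Finset.sum_pair (by norm_num)]

variable {ι : Type*} (R : Type*) [CommRing R]

/-- The Walsh character `ψ_S(a) = ∏ r ∈ S, a r` of the hypercube `{-1, 1}^ι`, with values in `R`. -/
def walsh (S : Finset ι) (a : ι → SignValue) : R := ∏ r ∈ S, ((a r : ℤ) : R)

lemma walsh_empty : walsh R (∅ : Finset ι) = 1 := rfl

lemma walsh_singleton (r : ι) (a : ι → SignValue) : walsh R {r} a = ((a r : ℤ) : R) :=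
  Finset.prod_singleton _ _

lemma walsh_mul_self (S : Finset ι) (a : ι → SignValue) : walsh R S a * walsh R S a = 1 := by
  simp only [walsh, ← Finset.prod_mul_distrib, SignValue.cast_mul_self, Finset.prod_const_one]

variable [DecidableEq ι]

lemma walsh_mul_walsh (S T : Finset ι) (a : ι → SignValue) :
    walsh R S a * walsh R T a = walsh R (symmDiff S T) a := by
  calc walsh R S a * walsh R T a
      = walsh R (S ∪ T) a * walsh R (S ∩ T) a := Finset.prod_union_inter.symm
    _ = walsh R ((S ∪ T) \ (S ∩ T)) a * walsh R (S ∩ T) a * walsh R (S ∩ T) a :=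
        congrArg (· * _) (Finset.prod_sdiff Finset.inter_subset_union).symm
    _ = walsh R ((S ∪ T) \ (S ∩ T)) a := by
        rw [mul_assoc, walsh_mul_self, mul_one]
    _ = walsh R (symmDiff S T) a := by
        rw [symmDiff_eq_sup_sdiff_inf, Finset.sup_eq_union, Finset.inf_eq_inter]

variable [Fintype ι]

lemma sum_walsh (S : Finset ι) :
    ∑ a, walsh R S a = if S = ∅ then 2 ^ Fintype.card ι else 0 := by
  have sum_factor (r : ι) :
      ∑ s : SignValue, (if r ∈ S then ((s : ℤ) : R) else 1) = if r ∉ S then 2 else 0 := by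
    rw [SignValue.sum_eq fun s => if r ∈ S then (s : R) else 1]
    by_cases hr : r ∈ S <;> simp [hr, one_add_one_eq_two]
  calc ∑ a, walsh R S a
      = ∏ r, ∑ s : SignValue, (if r ∈ S then ((s : ℤ) : R) else 1) := by
        simp only [walsh, Fintype.prod_sum, Fintype.prod_ite_mem]
    _ = if ∀ r, r ∉ S then 2 ^ Fintype.card ι else 0 := by
        simp only [sum_factor, Fintype.prod_ite_zero, Finset.prod_const, Finset.card_univ]
    _ = if S = ∅ then 2 ^ Fintype.card ι else 0 := by
        simp only [Finset.eq_empty_iff_forall_notMem]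

lemma walsh_dotProduct_walsh (S T : Finset ι) :
    walsh R S ⬝ᵥ walsh R T = if S = T then 2 ^ Fintype.card ι else 0 := by
  simp only [dotProduct, walsh_mul_walsh, sum_walsh, ← Finset.bot_eq_empty, symmDiff_eq_bot]

lemma vecMulVec_walsh_mulVec_walsh (T S : Finset ι) :
    Matrix.vecMulVec (walsh R T) (walsh R T) *ᵥ walsh R S =
      (if S = T then (2 : R) ^ Fintype.card ι else 0) • walsh R S := by
  rw [Matrix.vecMulVec_mulVec, walsh_dotProduct_walsh, op_smul_eq_smul]
  simp only [eq_comm (a := T)]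
  split_ifs with hST
  · rw [hST]
  · rw [zero_smul, zero_smul]

end Walsh

section PMI

variable {G ι R : Type*} [CommRing R]

lemma tensorVec_addChar_walsh_ne_zero [AddMonoid G] [Nontrivial R] (ψ : AddChar G R)
    (S : Finset ι) : tensorVec ψ (walsh R S) ≠ 0 := by
  intro h
  simpa [tensorVec, walsh] using congrFun h (0, fun _ => ⟨1, by simp⟩)

variable [Fintype ι]

/-- The attribute part `A + ∑ r, β r a_r b_r` of the PMI matrix, the constant offset included. -/
def attributeMatrix (A : R) (β : ι → R) : Matrix (ι → SignValue) (ι → SignValue) R :=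
  Matrix.of fun a b => A + ∑ r, β r * ((a r : ℤ) : R) * ((b r : ℤ) : R)

/-- The combined seasonal–attribute PMI matrix `K(x - y) + A + ∑ r, β r a_r b_r`, with seasonal
phases in an arbitrary additive group. -/
def pmiMatrix [Sub G] (K : G → R) (A : R) (β : ι → R) :
    Matrix (G × (ι → SignValue)) (G × (ι → SignValue)) R :=
  Matrix.of fun p q =>
    K (p.1 - q.1) + A + ∑ r, β r * ((p.2 r : ℤ) : R) * ((q.2 r : ℤ) : R)

lemma attributeMatrix_eq_sum_vecMulVec_walsh (A : R) (β : ι → R) :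
    attributeMatrix A β = A • Matrix.vecMulVec (walsh R ∅) (walsh R ∅) +
      ∑ r, β r • Matrix.vecMulVec (walsh R {r}) (walsh R {r}) := by
  ext a b
  simp [attributeMatrix, Matrix.sum_apply, Matrix.vecMulVec_apply, walsh_empty, walsh_singleton,
    mul_assoc]

lemma pmiMatrix_eq_kronecker_add_kronecker [Sub G] (K : G → R) (A : R) (β : ι → R) :
    pmiMatrix K A β =
      Matrix.circulant K ⊗ₖ Matrix.vecMulVec (walsh R ∅) (walsh R ∅) +
        Matrix.vecMulVec 1 1 ⊗ₖ attributeMatrix A β := by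
  ext p q
  simp [pmiMatrix, attributeMatrix, walsh_empty, add_assoc]

variable [DecidableEq ι]

lemma attributeMatrix_mulVec_walsh (A : R) (β : ι → R) (S : Finset ι) :
    attributeMatrix A β *ᵥ walsh R S =
      (((if S = ∅ then A else 0) + ∑ r, if S = {r} then β r else 0) * 2 ^ Fintype.card ι) •
        walsh R S := by
  simp only [attributeMatrix_eq_sum_vecMulVec_walsh, Matrix.add_mulVec, Matrix.sum_mulVec,
    Matrix.smul_mulVec, vecMulVec_walsh_mulVec_walsh, smul_smul, ← Finset.sum_smul, ← add_smul,
    add_mul, Finset.sum_mul, mul_ite, ite_mul, mul_zero, zero_mul]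

variable [AddGroup G] [Fintype G] [IsDomain R]

lemma pmiMatrix_mulVec_tensorVec (K : G → R) (A : R) (β : ι → R) (ψ : AddChar G R)
    [Decidable (ψ = 0)] (S : Finset ι) :
    pmiMatrix K A β *ᵥ tensorVec ψ (walsh R S) =
      (kernelTransform K ψ * (if S = ∅ then 2 ^ Fintype.card ι else 0) +
        (if ψ = 0 then (Fintype.card G : R) else 0) *
          (((if S = ∅ then A else 0) + ∑ r, if S = {r} then β r else 0) * 2 ^ Fintype.card ι)) •
        tensorVec ψ (walsh R S) := by
  rw [pmiMatrix_eq_kronecker_add_kronecker, Matrix.add_mulVec, add_smul,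
    kronecker_mulVec_tensorVec_of_eigen (circulant_mulVec_addChar K ψ)
      (vecMulVec_walsh_mulVec_walsh R ∅ S),
    kronecker_mulVec_tensorVec_of_eigen (vecMulVec_one_one_mulVec_addChar ψ)
      (attributeMatrix_mulVec_walsh A β S)]

theorem seasonal_attribute_pmi_spectrum_general (K : G → R) (A : R) (β : ι → R)
    (ψ : AddChar G R) (S : Finset ι) :
    let M := pmiMatrix K A β
    let Φ := tensorVec ψ (walsh R S)
    Φ ≠ 0 ∧
    (ψ = 0 → S = ∅ → M *ᵥ Φ = (2 ^ Fintype.card ι * kernelTransform K 0 +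
      A * Fintype.card G * 2 ^ Fintype.card ι) • Φ) ∧
    (ψ ≠ 0 → S = ∅ → M *ᵥ Φ = (2 ^ Fintype.card ι * kernelTransform K ψ) • Φ) ∧
    (∀ r, ψ = 0 → S = {r} → M *ᵥ Φ = (Fintype.card G * 2 ^ Fintype.card ι * β r) • Φ) ∧
    (S ≠ ∅ → ¬(ψ = 0 ∧ S.card = 1) → M *ᵥ Φ = (0 : R) • Φ) := by
  classical
  intro M Φ
  have eigen := pmiMatrix_mulVec_tensorVec K A β ψ S
  refine ⟨tensorVec_addChar_walsh_ne_zero ψ S, ?_, ?_, ?_, ?_⟩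
  · rintro rfl rfl
    refine eigen.trans (congrArg (· • Φ) ?_)
    simp only [↓reduceIte, empty_ne_singleton, sum_const_zero, add_zero]
    ring
  · rintro hψ rfl
    refine eigen.trans (congrArg (· • Φ) ?_)
    simp [hψ, mul_comm]
  · rintro r rfl rfl
    refine eigen.trans (congrArg (· • Φ) ?_)
    simp only [singleton_ne_empty, ↓reduceIte, mul_zero, singleton_inj, sum_ite_eq, mem_univ,
      zero_add]
    ring
  · intro hS hψS
    refine eigen.trans (congrArg (· • Φ) ?_)
    have no_singleton (hψ : ψ = 0) (r : ι) : S ≠ {r} := by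
      rintro rfl
      exact hψS ⟨hψ, Finset.card_singleton r⟩
    by_cases hψ : ψ = 0
    · simp [hS, no_singleton hψ]
    · simp [hS, hψ]

end PMI

section FourierMode

variable {N : ℕ} [NeZero N]

/-- The Fourier mode `x ↦ exp(2πi k x / N)` as an additive character of `ZMod N`. -/
noncomputable def fourierMode (k : ZMod N) : AddChar (ZMod N) ℂ :=
  AddChar.mulShift ZMod.stdAddChar k

lemma fourierMode_apply (k x : ZMod N) :
    fourierMode k x =
      Complex.exp (2 * Real.pi * Complex.I * (k.val : ℂ) * (x.val : ℂ) / N) := by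
  have h := ZMod.stdAddChar_coe (N := N) (k.val * x.val)
  push_cast [ZMod.natCast_zmod_val] at h
  rw [fourierMode, AddChar.mulShift_apply, h, ← mul_assoc]

lemma fourierMode_zero : fourierMode (0 : ZMod N) = 0 :=
  AddChar.mulShift_zero _

lemma fourierMode_eq_zero_iff (k : ZMod N) : fourierMode k = 0 ↔ k = 0 := by
  rw [← fourierMode_zero]
  exact (AddChar.to_mulShift_inj_of_isPrimitive (ZMod.isPrimitive_stdAddChar N)).eq_iff

end FourierMode

/-- Spectrum of the combined seasonal–attribute PMI model: the matrix
`M((x,a),(y,b)) = K_t(x−y) + A + ∑_r β_r a_r b_r` on `ZMod N × {−1,+1}^d` is diagonalized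
by the products `Φ_{k,S}(x,a) = e^{2πikx/N}·∏_{r∈S} a_r` of Fourier modes and Walsh
characters, with eigenvalue `2^d μ_0 + A N 2^d` for `(k,S) = (0,∅)`, `2^d μ_k` for
`k ≠ 0, S = ∅`, `N 2^d β_r` for `k = 0, S = {r}`, and `0` otherwise, where
`μ_k = ∑_j e^{2πikj/N} K_t(j)`. -/
theorem seasonal_attribute_pmi_spectrum (N d : ℕ) [NeZero N] (hd : 0 < d)
    (Kt : ZMod N → ℝ) (hKt : ∀ j : ZMod N, Kt (-j) = Kt j) (A : ℝ) (β : Fin d → ℝ) :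
    let H := Fin d → {x : ℤ // x ∈ ({-1, 1} : Finset ℤ)}
    let M : Matrix (ZMod N × H) (ZMod N × H) ℂ :=
      Matrix.of fun p q =>
        ((Kt (p.1 - q.1) : ℝ) : ℂ) + (A : ℂ) +
          ∑ r, ((β r : ℝ) : ℂ) * ((p.2 r : ℤ) : ℂ) * ((q.2 r : ℤ) : ℂ)
    let μ : ZMod N → ℂ := fun k =>
      ∑ j : ZMod N, Complex.exp (2 * Real.pi * Complex.I * (k.val : ℂ) * (j.val : ℂ) / N) *
        ((Kt j : ℝ) : ℂ)
    ∀ (k : ZMod N) (S : Finset (Fin d)),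
      let Φ : ZMod N × H → ℂ := fun p =>
        Complex.exp (2 * Real.pi * Complex.I * (k.val : ℂ) * ((p.1).val : ℂ) / N) *
          ∏ r ∈ S, ((p.2 r : ℤ) : ℂ)
      Φ ≠ 0 ∧
      (k = 0 → S = ∅ → M.mulVec Φ = ((2 : ℂ) ^ d * μ 0 + (A : ℂ) * N * 2 ^ d) • Φ) ∧
      (k ≠ 0 → S = ∅ → M.mulVec Φ = ((2 : ℂ) ^ d * μ k) • Φ) ∧
      (∀ r : Fin d, k = 0 → S = {r} → M.mulVec Φ = (((N : ℂ)) * 2 ^ d * (β r : ℂ)) • Φ) ∧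
      (S ≠ ∅ → ¬(k = 0 ∧ S.card = 1) → M.mulVec Φ = (0 : ℂ) • Φ) := by
  intro H M μ k S Φ
  let K : ZMod N → ℂ := fun j => Kt j
  have hK (j : ZMod N) : K (-j) = K j := congrArg Complex.ofReal (hKt j)
  have hμ (k : ZMod N) : μ k = kernelTransform K (fourierMode k) := by
    simp only [kernelTransform_of_even hK, fourierMode_apply, μ, K]
  have hΦ : Φ = tensorVec (fourierMode k) (walsh ℂ S) := by
    ext p
    simp only [tensorVec, walsh, fourierMode_apply, Φ]
  have hM : M = pmiMatrix K A (fun r => (β r : ℂ)) := rfl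
  simpa only [hM, hμ, hΦ, fourierMode_zero, fourierMode_eq_zero_iff, ZMod.card, Fintype.card_fin,
    ne_eq] using seasonal_attribute_pmi_spectrum_general K A (fun r => (β r : ℂ)) (fourierMode k) S
end
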